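/- Let K be a Markov kernel on a measurable space X that is reversible with respect to a probability measure π and has absolute spectral gap γ ∈ (0,1]. Let Ω ≥ 1 and let μ̃ be a probability measure that is Ω-warm with respect to π. Let P ≥ 1 be an integer and let (X_1,…,X_P) have the chain law of length P for (K, μ̃). Let f : X → ℝ be measurable with |f(x)| ≤ B for all x, where B > 0. Then for every ε > 0: P( | P^{-1}·Σ_{p=1}^P f(X_p) − ∫ f dπ | ≥ ε ) ≤ 2Ω·exp( − Pγε²/(4B²) ). -/

import Mathlib

open MeasureTheory

/-- Reversibility of the kernel `K` with respect to `π`. -/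
def Reversible {X : Type*} [MeasurableSpace X] (K : X → Measure X) (π : Measure X) : Prop :=
  ∀ A B : Set X, MeasurableSet A → MeasurableSet B →
    ∫⁻ x in A, K x B ∂π = ∫⁻ x in B, K x A ∂π

/-- `K` has absolute spectral gap `γ` (stated with squared `L²(π)` norms). -/
def HasAbsSpectralGap {X : Type*} [MeasurableSpace X] (K : X → Measure X) (π : Measure X)
    (γ : ℝ) : Prop :=
  ∀ h : X → ℝ, MemLp h 2 π → ∫ x, h x ∂π = 0 →
    ∫ x, (∫ y, h y ∂(K x)) ^ 2 ∂π ≤ (1 - γ) ^ 2 * ∫ x, (h x) ^ 2 ∂π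

/-- `μ` is `Ω`-warm with respect to `π`: `μ(A) ≤ Ω π(A)` for all measurable `A`. -/
def IsWarm {X : Type*} [MeasurableSpace X] (μ π : Measure X) (ω : ℝ) : Prop :=
  ∀ A : Set X, MeasurableSet A → μ A ≤ ENNReal.ofReal ω * π A

/-- The law of `(X_1, …, X_{n+1})` for a Markov chain with kernel `K` and initial
distribution `μ`. -/
noncomputable def chainLaw {X : Type*} [MeasurableSpace X] (K : X → Measure X)
    (μ : Measure X) : (n : ℕ) → Measure (Fin (n + 1) → X)
  | 0 => μ.map (fun x => fun _ => x)
  | n + 1 => (chainLaw K μ n).bind (fun xs => (K (xs (Fin.last n))).map (Fin.snoc xs))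

open ProbabilityTheory

/-! Put `φ = θ (f - ∫ f dπ)` and `T g = exp φ · κ g`. The exponential moment of `∑ φ (X_p)` along
the chain of length `n + 1` is `∫ Tⁿ(exp φ) dμ`, hence at most `Ω ∫ Tⁿ(exp φ) dπ`.

With the quadratic form `q(g) = γ (∫ g dπ)² + (1 - γ) ∫ g² dπ`, the spectral gap gives
`(∫ h · κ g dπ)² ≤ q(h) q(g)`. On the other hand `q(g) ≤ r ∫ g² exp(-φ) dπ` with
`r = exp((θ B)² / γ)`: by `exp x ≥ 1 + x` this reduces to a bound on `θ ∫ g² (f - ∫ f dπ) dπ`,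
which follows from `(∫ |g² - ∫ g²|)² ≤ 4 Var(g) ∫ g²`. Taking `h = T g` shows that `T` has norm at
most `r` on `L²(exp(-φ) π)`, so the exponential moment is at most `Ω r^(n + 1)`, and Chernoff's
bound with the optimal `θ` concludes. -/

section RealInequalities

lemma sq_mul_add_le_of_sq_le_mul {x y z a b : ℝ} (ha : 0 ≤ a) (hb : 0 ≤ b) (hz : z ^ 2 ≤ a * b) :
    (x * y + z) ^ 2 ≤ (x ^ 2 + a) * (y ^ 2 + b) := by
  have hcross : 2 * (x * y) * z ≤ x ^ 2 * b + y ^ 2 * a := by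
    refine le_of_sq_le_sq ?_ (by positivity)
    calc (2 * (x * y) * z) ^ 2 = 4 * (x * y) ^ 2 * z ^ 2 := by ring
      _ ≤ 4 * (x * y) ^ 2 * (a * b) := by gcongr
      _ = 4 * (x ^ 2 * b) * (y ^ 2 * a) := by ring
      _ ≤ (x ^ 2 * b + y ^ 2 * a) ^ 2 := four_mul_le_sq_add _ _
  linarith

lemma mul_sub_le_abs_mul_add_abs {y B : ℝ} (hy : |y| ≤ B) (t m : ℝ) :
    t * (y - m) ≤ |t| * (B + |m|) := by
  calc t * (y - m) ≤ |t| * |y - m| := by rw [← abs_mul]; exact le_abs_self _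
    _ ≤ |t| * (B + |m|) := by gcongr; exact (abs_sub _ _).trans (by gcongr)

lemma exp_sq_mul_exp_neg (t : ℝ) : Real.exp t ^ 2 * Real.exp (-t) = Real.exp t := by
  rw [Real.exp_neg]
  field_simp

end RealInequalities

section MeanSquare

variable {X : Type*} [MeasurableSpace X] {π : Measure X} {f g : X → ℝ} {B γ : ℝ}

lemma sq_integral_mul_le (hf : MemLp f 2 π) (hg : MemLp g 2 π) :
    (∫ x, f x * g x ∂π) ^ 2 ≤ (∫ x, f x ^ 2 ∂π) * ∫ x, g x ^ 2 ∂π := by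
  have hff : Integrable (fun x => f x ^ 2) π := hf.integrable_sq
  have hfg : Integrable (fun x => f x * g x) π := hf.integrable_mul hg
  have hquad (c : ℝ) : 0 ≤ (∫ x, f x ^ 2 ∂π) * (c * c) + (2 * ∫ x, f x * g x ∂π) * c
      + ∫ x, g x ^ 2 ∂π := by
    calc 0 ≤ ∫ x, (c * f x + g x) ^ 2 ∂π := integral_nonneg fun x => sq_nonneg _
      _ = ∫ x, (c * c * f x ^ 2 + 2 * c * (f x * g x)) + g x ^ 2 ∂π := by
        congr with x; ring
      _ = _ := by
        rw [integral_add (by fun_prop) hg.integrable_sq, integral_add (by fun_prop) (by fun_prop),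
          integral_const_mul, integral_const_mul]
        ring
  have := discrim_le_zero hquad
  rw [discrim] at this
  linarith

lemma sq_covariance_le [IsFiniteMeasure π] (hf : MemLp f 2 π) (hg : MemLp g 2 π) :
    cov[f, g; π] ^ 2 ≤ Var[f; π] * Var[g; π] := by
  rw [covariance, variance_eq_integral hf.aemeasurable, variance_eq_integral hg.aemeasurable]
  exact sq_integral_mul_le (hf.sub (memLp_const _)) (hg.sub (memLp_const _))

lemma memLp_exp_of_ae_le [IsFiniteMeasure π] (hf : AEStronglyMeasurable f π)
    (hfB : ∀ᵐ x ∂π, f x ≤ B) (p : ENNReal) : MemLp (fun x => Real.exp (f x)) p π :=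
  .of_bound (Real.continuous_exp.comp_aestronglyMeasurable hf) (Real.exp B) <|
    hfB.mono fun x hx => by rwa [Real.norm_eq_abs, Real.abs_exp, Real.exp_le_exp]

lemma integrable_sq_mul_exp_mul_sub (hf : AEStronglyMeasurable f π)
    (hfB : ∀ᵐ x ∂π, |f x| ≤ B) (hg : MemLp g 2 π) (t m : ℝ) :
    Integrable (fun x => g x ^ 2 * Real.exp (t * (f x - m))) π := by
  refine hg.integrable_sq.mul_bdd (c := Real.exp (|t| * (B + |m|))) (by fun_prop)
    (hfB.mono fun x hx => ?_)
  rw [Real.norm_eq_abs, Real.abs_exp, Real.exp_le_exp]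
  exact mul_sub_le_abs_mul_add_abs hx t m

variable [IsProbabilityMeasure π]

lemma integral_abs_add_const_sq (hg : MemLp g 2 π) (s : ℝ) :
    ∫ x, (|g x| + s) ^ 2 ∂π = ∫ x, g x ^ 2 ∂π + 2 * s * ∫ x, |g x| ∂π + s ^ 2 := by
  have hgg : Integrable (fun x => g x ^ 2) π := hg.integrable_sq
  have habs : Integrable (fun x => |g x|) π := (hg.integrable one_le_two).abs
  calc ∫ x, (|g x| + s) ^ 2 ∂π = ∫ x, (g x ^ 2 + 2 * s * |g x|) + s ^ 2 ∂π := by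
        congr with x; rw [← sq_abs (g x)]; ring
    _ = _ := by
      rw [integral_add (by fun_prop) (by fun_prop), integral_add hgg (by fun_prop),
        integral_const_mul, integral_const]
      simp

lemma sq_integral_abs_sq_sub_integral_sq_le (hg : MemLp g 2 π) :
    (∫ x, |g x ^ 2 - ∫ y, g y ^ 2 ∂π| ∂π) ^ 2 ≤ 4 * Var[g; π] * ∫ x, g x ^ 2 ∂π := by
  set N := ∫ x, g x ^ 2 ∂π
  have hN : 0 ≤ N := integral_nonneg fun x => sq_nonneg _
  have hs : √N ^ 2 = N := Real.sq_sqrt hN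
  have hfactor (x : X) : |g x ^ 2 - N| = |(|g x| + -√N)| * (|g x| + √N) := by
    rw [← abs_of_nonneg (show 0 ≤ |g x| + √N by positivity), ← abs_mul]
    congr 1
    linear_combination hs - sq_abs (g x)
  have hmean : (∫ x, g x ∂π) ^ 2 ≤ (∫ x, |g x| ∂π) ^ 2 :=
    sq_le_sq.2 (abs_integral_le_integral_abs.trans (le_abs_self _))
  have hvar : Var[g; π] = N - (∫ x, g x ∂π) ^ 2 := variance_eq_sub hg
  calc (∫ x, |g x ^ 2 - N| ∂π) ^ 2
      = (∫ x, |(|g x| + -√N)| * (|g x| + √N) ∂π) ^ 2 := by simp only [hfactor]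
    _ ≤ (∫ x, |(|g x| + -√N)| ^ 2 ∂π) * ∫ x, (|g x| + √N) ^ 2 ∂π :=
      sq_integral_mul_le (hg.abs.add (memLp_const _)).abs (hg.abs.add (memLp_const _))
    _ = 4 * (N - (∫ x, |g x| ∂π) ^ 2) * N := by
      simp only [sq_abs]
      rw [integral_abs_add_const_sq hg, integral_abs_add_const_sq hg]
      linear_combination (√N ^ 2 + 3 * N - 4 * (∫ x, |g x| ∂π) ^ 2) * hs
    _ ≤ 4 * Var[g; π] * N := by rw [hvar]; gcongr

lemma sq_integral_sq_mul_sub_integral_le (hf : AEStronglyMeasurable f π)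
    (hfB : ∀ᵐ x ∂π, |f x| ≤ B) (hg : MemLp g 2 π) :
    (∫ x, g x ^ 2 * (f x - ∫ y, f y ∂π) ∂π) ^ 2 ≤
      4 * B ^ 2 * Var[g; π] * ∫ x, g x ^ 2 ∂π := by
  set N := ∫ x, g x ^ 2 ∂π
  have hfint : Integrable f π := .of_bound hf B hfB
  have hgf : Integrable (fun x => g x ^ 2 * f x) π := hg.integrable_sq.mul_bdd hf hfB
  have hdev : Integrable (fun x => |g x ^ 2 - N|) π :=
    (hg.integrable_sq.sub (integrable_const N)).abs
  have hswap : ∫ x, g x ^ 2 * (f x - ∫ y, f y ∂π) ∂π = ∫ x, (g x ^ 2 - N) * f x ∂π := by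
    simp only [mul_sub, sub_mul]
    rw [integral_sub hgf (hg.integrable_sq.mul_const _), integral_sub hgf (hfint.const_mul _),
      integral_mul_const, integral_const_mul]
  have hbound : |∫ x, (g x ^ 2 - N) * f x ∂π| ≤ B * ∫ x, |g x ^ 2 - N| ∂π := by
    rw [← integral_const_mul]
    refine norm_integral_le_of_norm_le (f := fun x => (g x ^ 2 - N) * f x) (hdev.const_mul B)
      (hfB.mono fun x hx => ?_)
    rw [Real.norm_eq_abs, abs_mul, mul_comm]
    gcongr
  calc (∫ x, g x ^ 2 * (f x - ∫ y, f y ∂π) ∂π) ^ 2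
      ≤ (B * ∫ x, |g x ^ 2 - N| ∂π) ^ 2 := by
        rw [hswap]
        exact sq_le_sq.2 (hbound.trans (le_abs_self _))
    _ = B ^ 2 * (∫ x, |g x ^ 2 - N| ∂π) ^ 2 := by ring
    _ ≤ B ^ 2 * (4 * Var[g; π] * N) := by
        gcongr
        exact sq_integral_abs_sq_sub_integral_sq_le hg
    _ = 4 * B ^ 2 * Var[g; π] * N := by ring

lemma mul_integral_sq_mul_sub_integral_le (hγ : 0 < γ) (hf : AEStronglyMeasurable f π)
    (hfB : ∀ᵐ x ∂π, |f x| ≤ B) (hg : MemLp g 2 π) (θ : ℝ) :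
    θ * ∫ x, g x ^ 2 * (f x - ∫ y, f y ∂π) ∂π ≤
      γ * Var[g; π] + (θ * B) ^ 2 / γ * ∫ x, g x ^ 2 ∂π := by
  set N := ∫ x, g x ^ 2 ∂π
  have hN : 0 ≤ N := integral_nonneg fun x => sq_nonneg _
  have hV : 0 ≤ Var[g; π] := variance_nonneg g π
  refine le_of_sq_le_sq ?_ (add_nonneg (mul_nonneg hγ.le hV) (mul_nonneg (by positivity) hN))
  calc (θ * ∫ x, g x ^ 2 * (f x - ∫ y, f y ∂π) ∂π) ^ 2
      ≤ θ ^ 2 * (4 * B ^ 2 * Var[g; π] * N) := by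
        rw [mul_pow]
        gcongr
        exact sq_integral_sq_mul_sub_integral_le hf hfB hg
    _ = 4 * (γ * Var[g; π]) * ((θ * B) ^ 2 / γ * N) := by field_simp
    _ ≤ (γ * Var[g; π] + (θ * B) ^ 2 / γ * N) ^ 2 := four_mul_le_sq_add _ _

end MeanSquare

/-- The quadratic form `⟪g, (γ Π + (1 - γ) I) g⟫` on `L²(π)`, where `Π g = ∫ g ∂π`. The operator
`γ Π + (1 - γ) I` is the Leon–Perron kernel, the extremal kernel with absolute spectral gap `γ`. -/
noncomputable def leonPerronForm {X : Type*} [MeasurableSpace X] (π : Measure X) (γ : ℝ)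
    (g : X → ℝ) : ℝ :=
  γ * (∫ x, g x ∂π) ^ 2 + (1 - γ) * ∫ x, g x ^ 2 ∂π

section LeonPerronForm

variable {X : Type*} [MeasurableSpace X] {π : Measure X} [IsProbabilityMeasure π] {f g : X → ℝ}
  {B γ : ℝ}

lemma leonPerronForm_eq_sq_integral_add_variance (hg : MemLp g 2 π) (γ : ℝ) :
    leonPerronForm π γ g = (∫ x, g x ∂π) ^ 2 + (1 - γ) * Var[g; π] := by
  rw [leonPerronForm, variance_eq_sub hg]
  simp only [Pi.pow_apply]
  ring

lemma sq_integral_le_leonPerronForm (hγ : γ ≤ 1) (hg : MemLp g 2 π) :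
    (∫ x, g x ∂π) ^ 2 ≤ leonPerronForm π γ g := by
  rw [leonPerronForm_eq_sq_integral_add_variance hg]
  exact le_add_of_nonneg_right (mul_nonneg (sub_nonneg.2 hγ) (variance_nonneg g π))

lemma leonPerronForm_le_exp_mul (hγ : 0 < γ) (hf : AEStronglyMeasurable f π)
    (hfB : ∀ᵐ x ∂π, |f x| ≤ B) (hg : MemLp g 2 π) (θ : ℝ) :
    leonPerronForm π γ g ≤ Real.exp ((θ * B) ^ 2 / γ) *
      ∫ x, g x ^ 2 * Real.exp (-(θ * (f x - ∫ y, f y ∂π))) ∂π := by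
  set m := ∫ y, f y ∂π
  set c := (θ * B) ^ 2 / γ
  have hgg : Integrable (fun x => g x ^ 2) π := hg.integrable_sq
  have hlin : Integrable (fun x => g x ^ 2 * (f x - m)) π := by
    simp only [mul_sub]
    exact (hgg.mul_bdd hf hfB).sub (hgg.mul_const m)
  have hexp : Integrable (fun x => g x ^ 2 * Real.exp (-(θ * (f x - m)))) π := by
    simpa only [neg_mul] using integrable_sq_mul_exp_mul_sub hf hfB hg (-θ) m
  have hpoint (x : X) : (1 + c) * g x ^ 2 - θ * (g x ^ 2 * (f x - m)) ≤
      Real.exp c * (g x ^ 2 * Real.exp (-(θ * (f x - m)))) := by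
    have := mul_le_mul_of_nonneg_left (Real.add_one_le_exp (c + -(θ * (f x - m))))
      (sq_nonneg (g x))
    rw [Real.exp_add] at this
    linarith
  have hform : leonPerronForm π γ g = ∫ x, g x ^ 2 ∂π - γ * Var[g; π] := by
    rw [leonPerronForm, variance_eq_sub hg]
    simp only [Pi.pow_apply]
    ring
  have hcross := mul_integral_sq_mul_sub_integral_le hγ hf hfB hg θ
  calc leonPerronForm π γ g
      ≤ (1 + c) * ∫ x, g x ^ 2 ∂π - θ * ∫ x, g x ^ 2 * (f x - m) ∂π := by linarith
    _ = ∫ x, (1 + c) * g x ^ 2 - θ * (g x ^ 2 * (f x - m)) ∂π := by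
      rw [integral_sub (hgg.const_mul _) (hlin.const_mul _), integral_const_mul,
        integral_const_mul]
    _ ≤ ∫ x, Real.exp c * (g x ^ 2 * Real.exp (-(θ * (f x - m)))) ∂π :=
      integral_mono ((hgg.const_mul _).sub (hlin.const_mul _)) (hexp.const_mul _) hpoint
    _ = _ := integral_const_mul _ _

end LeonPerronForm

section InvariantKernel

variable {X : Type*} [MeasurableSpace X] {κ : Kernel X X} {π : Measure X} {g h : X → ℝ}

lemma comp_const_apply_of_invariant (hinv : κ.Invariant π) :
    (κ ∘ₖ Kernel.const Unit π) () = π := by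
  rw [← Measure.comp_eq_comp_const_apply, hinv.def]

lemma integral_integral_of_invariant (hinv : κ.Invariant π) (hg : Integrable g π) :
    ∫ x, ∫ y, g y ∂κ x ∂π = ∫ x, g x ∂π := by
  have hcomp := comp_const_apply_of_invariant hinv
  have := Kernel.integral_comp (η := κ) (κ := Kernel.const Unit π) (a := ()) (f := g)
    (by rwa [hcomp])
  rw [hcomp, Kernel.const_apply] at this
  exact this.symm

lemma integrable_integral_of_invariant (hinv : κ.Invariant π) (hg : Integrable g π) :
    Integrable (fun x => ∫ y, g y ∂κ x) π := by
  have hcomp := comp_const_apply_of_invariant hinv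
  exact Integrable.integral_comp (η := κ) (κ := Kernel.const Unit π) (a := ()) (by rwa [hcomp])

lemma ae_integrable_of_invariant (hinv : κ.Invariant π) (hg : Integrable g π) :
    ∀ᵐ x ∂π, Integrable g (κ x) :=
  Measure.ae_integrable_of_integrable_comp (by rwa [hinv.def])

lemma memLp_two_integral_of_invariant [IsFiniteMeasure π] [IsMarkovKernel κ]
    (hinv : κ.Invariant π) (hg : MemLp g 2 π) : MemLp (fun x => ∫ y, g y ∂κ x) 2 π := by
  have hint := integrable_integral_of_invariant hinv (hg.integrable one_le_two)
  refine (memLp_two_iff_integrable_sq hint.aestronglyMeasurable).2 <|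
    (integrable_integral_of_invariant hinv hg.integrable_sq).mono'
      (hint.aestronglyMeasurable.pow 2) ?_
  filter_upwards [ae_integrable_of_invariant hinv (hg.integrable one_le_two),
    ae_integrable_of_invariant hinv hg.integrable_sq] with x hx hx2
  have hvar := variance_eq_sub ((memLp_two_iff_integrable_sq hx.aestronglyMeasurable).2 hx2)
  have hnonneg := variance_nonneg g (κ x)
  simp only [Pi.pow_apply] at hvar
  rw [Real.norm_eq_abs, abs_sq]
  linarith

variable {γ : ℝ} [IsProbabilityMeasure π] [IsMarkovKernel κ]

lemma variance_integral_kernel_le (hinv : κ.Invariant π) (hgap : HasAbsSpectralGap κ π γ)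
    (hg : MemLp g 2 π) :
    Var[fun x => ∫ y, g y ∂κ x; π] ≤ (1 - γ) ^ 2 * Var[g; π] := by
  have hint := hg.integrable one_le_two
  have hcentered : ∫ x, (g x - ∫ y, g y ∂π) ∂π = 0 := by
    rw [integral_sub hint (integrable_const _)]
    simp
  rw [variance_eq_integral (memLp_two_integral_of_invariant hinv hg).aemeasurable,
    variance_eq_integral hg.aemeasurable, integral_integral_of_invariant hinv hint]
  refine le_of_eq_of_le (integral_congr_ae ?_) (hgap _ (hg.sub (memLp_const _)) hcentered)
  filter_upwards [ae_integrable_of_invariant hinv hint] with x hx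
  rw [integral_sub hx (integrable_const _)]
  simp

lemma sq_integral_mul_integral_kernel_le (hγ : γ ≤ 1) (hinv : κ.Invariant π)
    (hgap : HasAbsSpectralGap κ π γ) (hh : MemLp h 2 π) (hg : MemLp g 2 π) :
    (∫ x, h x * ∫ y, g y ∂κ x ∂π) ^ 2 ≤ leonPerronForm π γ h * leonPerronForm π γ g := by
  have hκg := memLp_two_integral_of_invariant hinv hg
  have hγ' : 0 ≤ 1 - γ := sub_nonneg.2 hγ
  have hsplit : ∫ x, h x * ∫ y, g y ∂κ x ∂π =
      (∫ x, h x ∂π) * (∫ x, g x ∂π) + cov[h, fun x => ∫ y, g y ∂κ x; π] := by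
    rw [covariance_eq_sub hh hκg, integral_integral_of_invariant hinv (hg.integrable one_le_two)]
    simp only [Pi.mul_apply]
    ring
  rw [hsplit, leonPerronForm_eq_sq_integral_add_variance hh,
    leonPerronForm_eq_sq_integral_add_variance hg]
  refine sq_mul_add_le_of_sq_le_mul (mul_nonneg hγ' (variance_nonneg _ _))
    (mul_nonneg hγ' (variance_nonneg _ _)) ?_
  calc cov[h, fun x => ∫ y, g y ∂κ x; π] ^ 2
      ≤ Var[h; π] * Var[fun x => ∫ y, g y ∂κ x; π] := sq_covariance_le hh hκg
    _ ≤ Var[h; π] * ((1 - γ) ^ 2 * Var[g; π]) := by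
        gcongr
        · exact variance_nonneg _ _
        · exact variance_integral_kernel_le hinv hgap hg
    _ = (1 - γ) * Var[h; π] * ((1 - γ) * Var[g; π]) := by ring

end InvariantKernel

/-- The operator `g ↦ exp(φ) · κ g`, whose iterates at `exp ∘ φ` compute the exponential moment of
`∑ i, φ (X_i)` along the chain with kernel `κ`. -/
noncomputable def tiltedOp {X : Type*} [MeasurableSpace X] (κ : Kernel X X) (φ : X → ℝ)
    (g : X → ℝ) (x : X) : ℝ :=
  Real.exp (φ x) * ∫ y, g y ∂κ x

section TiltedOperator

variable {X : Type*} [MeasurableSpace X] {κ : Kernel X X} {π : Measure X} {φ g : X → ℝ}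
  {γ r C : ℝ}

lemma measurable_tiltedOp (hφ : Measurable φ) (hg : Measurable g) :
    Measurable (tiltedOp κ φ g) :=
  hφ.exp.mul hg.stronglyMeasurable.integral_kernel.measurable

lemma tiltedOp_iterate_nonneg (hg : ∀ x, 0 ≤ g x) (n : ℕ) (x : X) :
    0 ≤ (tiltedOp κ φ)^[n] g x := by
  induction n generalizing x with
  | zero => exact hg x
  | succ n ih =>
    rw [Function.iterate_succ_apply']
    exact mul_nonneg (Real.exp_pos _).le (integral_nonneg ih)

variable [IsMarkovKernel κ] [IsProbabilityMeasure π]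

lemma memLp_two_tiltedOp (hinv : κ.Invariant π) (hφ : AEStronglyMeasurable φ π)
    (hφC : ∀ᵐ x ∂π, φ x ≤ C) (hg : MemLp g 2 π) : MemLp (tiltedOp κ φ g) 2 π :=
  (memLp_two_integral_of_invariant hinv hg).mul (memLp_exp_of_ae_le hφ hφC ⊤)

lemma memLp_two_iterate_tiltedOp (hinv : κ.Invariant π) (hφ : AEStronglyMeasurable φ π)
    (hφC : ∀ᵐ x ∂π, φ x ≤ C) (hg : MemLp g 2 π) (n : ℕ) :
    MemLp ((tiltedOp κ φ)^[n] g) 2 π := by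
  induction n with
  | zero => exact hg
  | succ n ih =>
    rw [Function.iterate_succ_apply']
    exact memLp_two_tiltedOp hinv hφ hφC ih

lemma integral_sq_tiltedOp_mul_exp_neg_le (hγ : γ ≤ 1) (hinv : κ.Invariant π)
    (hgap : HasAbsSpectralGap κ π γ) (hφ : AEStronglyMeasurable φ π) (hφC : ∀ᵐ x ∂π, φ x ≤ C)
    (hr : 0 ≤ r)
    (hform : ∀ g, MemLp g 2 π → leonPerronForm π γ g ≤ r * ∫ x, g x ^ 2 * Real.exp (-φ x) ∂π)
    (hg : MemLp g 2 π) :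
    ∫ x, tiltedOp κ φ g x ^ 2 * Real.exp (-φ x) ∂π ≤
      r ^ 2 * ∫ x, g x ^ 2 * Real.exp (-φ x) ∂π := by
  have hTg := memLp_two_tiltedOp hinv hφ hφC hg
  set N := ∫ x, g x ^ 2 * Real.exp (-φ x) ∂π
  set M := ∫ x, tiltedOp κ φ g x ^ 2 * Real.exp (-φ x) ∂π with hM
  have hN : 0 ≤ N := integral_nonneg fun x => by positivity
  have hM0 : 0 ≤ M := integral_nonneg fun x => by positivity
  have hpair : M = ∫ x, tiltedOp κ φ g x * ∫ y, g y ∂κ x ∂π := by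
    rw [hM]
    congr with x
    rw [tiltedOp, mul_pow, Real.exp_neg]
    field_simp
  have hsq : M * M ≤ M * (r ^ 2 * N) := by
    calc M * M = (∫ x, tiltedOp κ φ g x * ∫ y, g y ∂κ x ∂π) ^ 2 := by rw [← hpair, sq]
      _ ≤ leonPerronForm π γ (tiltedOp κ φ g) * leonPerronForm π γ g :=
        sq_integral_mul_integral_kernel_le hγ hinv hgap hTg hg
      _ ≤ (r * M) * (r * N) :=
        mul_le_mul (hform _ hTg) (hform _ hg)
          ((sq_nonneg _).trans (sq_integral_le_leonPerronForm hγ hg)) (mul_nonneg hr hM0)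
      _ = M * (r ^ 2 * N) := by ring
  rcases hM0.eq_or_lt with hzero | hpos
  · rw [← hzero]
    exact mul_nonneg (sq_nonneg r) hN
  · exact le_of_mul_le_mul_left hsq hpos

lemma integral_sq_iterate_tiltedOp_mul_exp_neg_le (hγ : γ ≤ 1) (hinv : κ.Invariant π)
    (hgap : HasAbsSpectralGap κ π γ) (hφ : AEStronglyMeasurable φ π) (hφC : ∀ᵐ x ∂π, φ x ≤ C)
    (hr : 0 ≤ r)
    (hform : ∀ g, MemLp g 2 π → leonPerronForm π γ g ≤ r * ∫ x, g x ^ 2 * Real.exp (-φ x) ∂π)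
    (hg : MemLp g 2 π) (n : ℕ) :
    ∫ x, (tiltedOp κ φ)^[n] g x ^ 2 * Real.exp (-φ x) ∂π ≤
      (r ^ 2) ^ n * ∫ x, g x ^ 2 * Real.exp (-φ x) ∂π := by
  induction n with
  | zero => simp
  | succ n ih =>
    rw [Function.iterate_succ_apply', pow_succ', mul_assoc]
    exact (integral_sq_tiltedOp_mul_exp_neg_le hγ hinv hgap hφ hφC hr hform
      (memLp_two_iterate_tiltedOp hinv hφ hφC hg n)).trans (by gcongr)

lemma integral_exp_le_of_leonPerronForm_le (hγ : γ ≤ 1) (hφ : AEStronglyMeasurable φ π)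
    (hφC : ∀ᵐ x ∂π, φ x ≤ C)
    (hform : ∀ g, MemLp g 2 π → leonPerronForm π γ g ≤ r * ∫ x, g x ^ 2 * Real.exp (-φ x) ∂π) :
    ∫ x, Real.exp (φ x) ∂π ≤ r := by
  have hexp := memLp_exp_of_ae_le hφ hφC 2
  have hpos : 0 < ∫ x, Real.exp (φ x) ∂π := integral_exp_pos (hexp.integrable one_le_two)
  refine le_of_mul_le_mul_right ?_ hpos
  calc (∫ x, Real.exp (φ x) ∂π) * ∫ x, Real.exp (φ x) ∂π
      ≤ leonPerronForm π γ (fun x => Real.exp (φ x)) := by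
        rw [← sq]
        exact sq_integral_le_leonPerronForm hγ hexp
    _ ≤ r * ∫ x, Real.exp (φ x) ^ 2 * Real.exp (-φ x) ∂π := hform _ hexp
    _ = r * ∫ x, Real.exp (φ x) ∂π := by simp only [exp_sq_mul_exp_neg]

lemma integral_iterate_tiltedOp_exp_le (hγ : γ ≤ 1) (hinv : κ.Invariant π)
    (hgap : HasAbsSpectralGap κ π γ) (hφ : AEStronglyMeasurable φ π) (hφC : ∀ᵐ x ∂π, φ x ≤ C)
    (hr : 0 ≤ r)
    (hform : ∀ g, MemLp g 2 π → leonPerronForm π γ g ≤ r * ∫ x, g x ^ 2 * Real.exp (-φ x) ∂π)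
    (n : ℕ) :
    ∫ x, (tiltedOp κ φ)^[n] (fun y => Real.exp (φ y)) x ∂π ≤ r ^ (n + 1) := by
  have hexp := memLp_exp_of_ae_le hφ hφC 2
  have hiter := memLp_two_iterate_tiltedOp hinv hφ hφC hexp n
  refine le_of_sq_le_sq ?_ (by positivity)
  calc (∫ x, (tiltedOp κ φ)^[n] (fun y => Real.exp (φ y)) x ∂π) ^ 2
      ≤ leonPerronForm π γ ((tiltedOp κ φ)^[n] fun y => Real.exp (φ y)) :=
        sq_integral_le_leonPerronForm hγ hiter
    _ ≤ r * ∫ x, (tiltedOp κ φ)^[n] (fun y => Real.exp (φ y)) x ^ 2 * Real.exp (-φ x) ∂π :=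
        hform _ hiter
    _ ≤ r * ((r ^ 2) ^ n * ∫ x, Real.exp (φ x) ^ 2 * Real.exp (-φ x) ∂π) := by
        gcongr
        exact integral_sq_iterate_tiltedOp_mul_exp_neg_le hγ hinv hgap hφ hφC hr hform hexp n
    _ ≤ r * ((r ^ 2) ^ n * r) := by
        simp only [exp_sq_mul_exp_neg]
        gcongr
        exact integral_exp_le_of_leonPerronForm_le hγ hφ hφC hform
    _ = (r ^ (n + 1)) ^ 2 := by ring

end TiltedOperator

section ChainLaw

variable {X : Type*} [MeasurableSpace X] {κ : Kernel X X} [IsMarkovKernel κ] {φ g : X → ℝ}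
  {C D : ℝ}

lemma measurable_finSnoc (n : ℕ) :
    Measurable fun p : (Fin n → X) × X => (Fin.snoc p.1 p.2 : Fin (n + 1) → X) := by
  refine measurable_pi_iff.2 fun i => ?_
  cases i using Fin.lastCases with
  | last => simpa only [Fin.snoc_last] using measurable_snd
  | cast j =>
    simp only [Fin.snoc_castSucc]
    fun_prop

lemma measurable_finSnoc_right {n : ℕ} (xs : Fin n → X) :
    Measurable fun y : X => (Fin.snoc xs y : Fin (n + 1) → X) :=
  (measurable_finSnoc n).comp measurable_prodMk_left

lemma measurable_kernel_map_finSnoc (κ : Kernel X X) [IsSFiniteKernel κ] (n : ℕ) :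
    Measurable fun xs : Fin (n + 1) → X =>
      (κ (xs (Fin.last n))).map fun y => (Fin.snoc xs y : Fin (n + 2) → X) := by
  let η : Kernel (Fin (n + 1) → X) X := κ.comap (fun xs => xs (Fin.last n)) (by fun_prop)
  refine Measure.measurable_of_measurable_coe _ fun s hs => ?_
  simp only [Measure.map_apply (measurable_finSnoc_right _) hs]
  exact Kernel.measurable_kernel_prodMk_left (κ := η) (measurable_finSnoc (n + 1) hs)

lemma lintegral_chainLaw_succ (κ : Kernel X X) [IsSFiniteKernel κ] (μ : Measure X) {n : ℕ}
    {F : (Fin (n + 2) → X) → ENNReal} (hF : Measurable F) :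
    ∫⁻ xs, F xs ∂chainLaw κ μ (n + 1) =
      ∫⁻ xs, ∫⁻ y, F (Fin.snoc xs y) ∂κ (xs (Fin.last n)) ∂chainLaw κ μ n := by
  rw [chainLaw, Measure.lintegral_bind (measurable_kernel_map_finSnoc κ n).aemeasurable
    hF.aemeasurable]
  exact lintegral_congr fun xs => lintegral_map hF (measurable_finSnoc_right xs)

lemma tiltedOp_mem_Icc (hφC : ∀ x, φ x ≤ C) (hg : Measurable g) (hgD : ∀ x, g x ∈ Set.Icc 0 D)
    (x : X) : tiltedOp κ φ g x ∈ Set.Icc 0 (Real.exp C * D) := by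
  have hint : Integrable g (κ x) := .of_mem_Icc 0 D hg.aemeasurable (.of_forall hgD)
  have hnonneg : 0 ≤ ∫ y, g y ∂κ x := integral_nonneg fun y => (hgD y).1
  have hle : ∫ y, g y ∂κ x ≤ D := by
    simpa using integral_mono hint (integrable_const D) fun y => (hgD y).2
  refine ⟨mul_nonneg (Real.exp_pos _).le hnonneg, ?_⟩
  rw [tiltedOp]
  gcongr
  exact hφC x

lemma lintegral_chainLaw_exp_sum_mul (hφ : Measurable φ) (hφC : ∀ x, φ x ≤ C) (μ : Measure X)
    (n : ℕ) (hg : Measurable g) (hgD : ∀ x, g x ∈ Set.Icc 0 D) :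
    ∫⁻ xs, ENNReal.ofReal
        (Real.exp (∑ i : Fin n, φ (xs i.castSucc)) * g (xs (Fin.last n))) ∂chainLaw κ μ n =
      ∫⁻ x, ENNReal.ofReal ((tiltedOp κ φ)^[n] g x) ∂μ := by
  induction n generalizing g D with
  | zero =>
    rw [chainLaw, lintegral_map (by fun_prop) (by fun_prop)]
    simp
  | succ n ih =>
    rw [lintegral_chainLaw_succ κ μ (by fun_prop), Function.iterate_succ_apply,
      ← ih (measurable_tiltedOp hφ hg) (tiltedOp_mem_Icc hφC hg hgD)]
    refine lintegral_congr fun xs => ?_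
    have hgint : Integrable g (κ (xs (Fin.last n))) :=
      .of_mem_Icc 0 D hg.aemeasurable (.of_forall hgD)
    simp only [Fin.snoc_castSucc, Fin.snoc_last]
    rw [← ofReal_integral_eq_lintegral_ofReal (hgint.const_mul _)
      (.of_forall fun y => mul_nonneg (Real.exp_pos _).le (hgD y).1), integral_const_mul,
      Fin.sum_univ_castSucc, Real.exp_add, tiltedOp, mul_assoc]

lemma lintegral_chainLaw_exp_sum (hφ : Measurable φ) (hφC : ∀ x, φ x ≤ C) (μ : Measure X)
    (n : ℕ) :
    ∫⁻ xs, ENNReal.ofReal (Real.exp (∑ i, φ (xs i))) ∂chainLaw κ μ n =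
      ∫⁻ x, ENNReal.ofReal ((tiltedOp κ φ)^[n] (fun y => Real.exp (φ y)) x) ∂μ := by
  rw [← lintegral_chainLaw_exp_sum_mul hφ hφC μ n hφ.exp
    fun x => ⟨(Real.exp_pos _).le, Real.exp_le_exp.2 (hφC x)⟩]
  simp only [Fin.sum_univ_castSucc, Real.exp_add]

lemma IsWarm.lintegral_le {μ π : Measure X} {W : ℝ} (hwarm : IsWarm μ π W) (F : X → ENNReal) :
    ∫⁻ x, F x ∂μ ≤ ENNReal.ofReal W * ∫⁻ x, F x ∂π := by
  rw [← smul_eq_mul, ← lintegral_smul_measure]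
  exact lintegral_mono' (Measure.le_iff.2 fun s hs => by simpa using hwarm s hs) le_rfl

end ChainLaw

section Concentration

variable {X : Type*} [MeasurableSpace X] {κ : Kernel X X} [IsMarkovKernel κ] {π μ : Measure X}
  [IsProbabilityMeasure π] {γ W B ε : ℝ} {f : X → ℝ}

lemma lintegral_chainLaw_exp_sum_le (hγ : γ ∈ Set.Ioc (0 : ℝ) 1) (hinv : κ.Invariant π)
    (hgap : HasAbsSpectralGap κ π γ) (hwarm : IsWarm μ π W) (hf : Measurable f)
    (hfB : ∀ x, |f x| ≤ B) (θ : ℝ) (n : ℕ) :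
    ∫⁻ xs, ENNReal.ofReal (Real.exp (∑ i, θ * (f (xs i) - ∫ y, f y ∂π))) ∂chainLaw κ μ n ≤
      ENNReal.ofReal (W * Real.exp ((θ * B) ^ 2 / γ) ^ (n + 1)) := by
  set m := ∫ y, f y ∂π
  set φ : X → ℝ := fun x => θ * (f x - m)
  have hφ : Measurable φ := by fun_prop
  have hφC (x : X) : φ x ≤ |θ| * (B + |m|) := mul_sub_le_abs_mul_add_abs (hfB x) θ m
  have hiter : Integrable ((tiltedOp κ φ)^[n] fun y => Real.exp (φ y)) π :=
    (memLp_two_iterate_tiltedOp hinv hφ.aestronglyMeasurable (.of_forall hφC)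
      (memLp_exp_of_ae_le hφ.aestronglyMeasurable (.of_forall hφC) 2) n).integrable one_le_two
  calc ∫⁻ xs, ENNReal.ofReal (Real.exp (∑ i, φ (xs i))) ∂chainLaw κ μ n
      = ∫⁻ x, ENNReal.ofReal ((tiltedOp κ φ)^[n] (fun y => Real.exp (φ y)) x) ∂μ :=
        lintegral_chainLaw_exp_sum hφ hφC μ n
    _ ≤ ENNReal.ofReal W *
          ENNReal.ofReal (∫ x, (tiltedOp κ φ)^[n] (fun y => Real.exp (φ y)) x ∂π) := by
        rw [ofReal_integral_eq_lintegral_ofReal hiter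
          (.of_forall (tiltedOp_iterate_nonneg (fun y => (Real.exp_pos _).le) n))]
        exact hwarm.lintegral_le _
    _ ≤ ENNReal.ofReal (W * Real.exp ((θ * B) ^ 2 / γ) ^ (n + 1)) := by
        rw [ENNReal.ofReal_mul' (by positivity)]
        gcongr
        exact integral_iterate_tiltedOp_exp_le hγ.2 hinv hgap hφ.aestronglyMeasurable
          (.of_forall hφC) (Real.exp_pos _).le
          (fun g hg => leonPerronForm_le_exp_mul hγ.1 hf.aestronglyMeasurable
            (.of_forall hfB) hg θ) n

lemma chainLaw_le_empiricalMean_sub_le (hγ : γ ∈ Set.Ioc (0 : ℝ) 1) (hinv : κ.Invariant π)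
    (hgap : HasAbsSpectralGap κ π γ) (hwarm : IsWarm μ π W) (hf : Measurable f) (hB : 0 < B)
    (hfB : ∀ x, |f x| ≤ B) (hε : 0 ≤ ε) (n : ℕ) :
    chainLaw κ μ n {xs | ε ≤ ((n : ℝ) + 1)⁻¹ * (∑ i, f (xs i)) - ∫ x, f x ∂π} ≤
      ENNReal.ofReal (W * Real.exp (-(((n : ℝ) + 1) * γ * ε ^ 2 / (4 * B ^ 2)))) := by
  have hγ0 : 0 < γ := hγ.1
  set m := ∫ x, f x ∂π
  -- This `θ` minimises the Chernoff exponent `(θ * B) ^ 2 / γ - θ * ε`.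
  set θ := γ * ε / (2 * B ^ 2) with hθ
  set c := Real.exp (((n : ℝ) + 1) * (θ * ε))
  have hsub : {xs : Fin (n + 1) → X | ε ≤ ((n : ℝ) + 1)⁻¹ * (∑ i, f (xs i)) - m} ⊆
      {xs | ENNReal.ofReal c ≤ ENNReal.ofReal (Real.exp (∑ i, θ * (f (xs i) - m)))} := by
    intro xs hxs
    rw [Set.mem_ofPred_eq] at hxs ⊢
    have hsum : ∑ i, θ * (f (xs i) - m) =
        ((n : ℝ) + 1) * (θ * (((n : ℝ) + 1)⁻¹ * (∑ i, f (xs i)) - m)) := by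
      rw [← Finset.mul_sum, Finset.sum_sub_distrib, Finset.sum_const, Finset.card_univ,
        Fintype.card_fin, nsmul_eq_mul, Nat.cast_add_one]
      field_simp
    rw [hsum]
    refine ENNReal.ofReal_le_ofReal (Real.exp_le_exp.2 ?_)
    gcongr
  have hmeas : Measurable fun xs : Fin (n + 1) → X =>
      ENNReal.ofReal (Real.exp (∑ i, θ * (f (xs i) - m))) := by fun_prop
  calc chainLaw κ μ n {xs | ε ≤ ((n : ℝ) + 1)⁻¹ * (∑ i, f (xs i)) - m}
      ≤ (∫⁻ xs, ENNReal.ofReal (Real.exp (∑ i, θ * (f (xs i) - m))) ∂chainLaw κ μ n) /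
          ENNReal.ofReal c :=
        (measure_mono hsub).trans <| meas_ge_le_lintegral_div hmeas.aemeasurable
          (by simpa using Real.exp_pos _) ENNReal.ofReal_ne_top
    _ ≤ ENNReal.ofReal (W * Real.exp ((θ * B) ^ 2 / γ) ^ (n + 1)) / ENNReal.ofReal c := by
        gcongr
        exact lintegral_chainLaw_exp_sum_le hγ hinv hgap hwarm hf hfB θ n
    _ = ENNReal.ofReal (W * Real.exp (-(((n : ℝ) + 1) * γ * ε ^ 2 / (4 * B ^ 2)))) := by
        rw [← ENNReal.ofReal_div_of_pos (Real.exp_pos _), mul_div_assoc, ← Real.exp_nat_mul,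
          ← Real.exp_sub, hθ, Nat.cast_add_one]
        congr 3
        field_simp
        ring

end Concentration

theorem stmt16_general {X : Type*} [MeasurableSpace X] (κ : Kernel X X) [IsMarkovKernel κ]
    (π μt : Measure X) [IsProbabilityMeasure π] (γ : ℝ) (hγ : γ ∈ Set.Ioc (0 : ℝ) 1)
    (hinv : κ.Invariant π) (hgap : HasAbsSpectralGap κ π γ) (W : ℝ) (hwarm : IsWarm μt π W)
    (n : ℕ) (f : X → ℝ) (hf : Measurable f) (B : ℝ) (hB : 0 < B) (hfB : ∀ x, |f x| ≤ B)
    (ε : ℝ) (hε : 0 ≤ ε) :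
    chainLaw κ μt n {xs | ε ≤ |((n : ℝ) + 1)⁻¹ * (∑ i, f (xs i)) - ∫ x, f x ∂π|} ≤
      ENNReal.ofReal (2 * W * Real.exp (-(((n : ℝ) + 1) * γ * ε ^ 2 / (4 * B ^ 2)))) := by
  have hupper := chainLaw_le_empiricalMean_sub_le hγ hinv hgap hwarm hf hB hfB hε n
  have hlower := chainLaw_le_empiricalMean_sub_le hγ hinv hgap hwarm hf.neg hB
    (fun x => (abs_neg (f x)).trans_le (hfB x)) hε n
  rw [mul_assoc, ENNReal.ofReal_mul zero_le_two, ENNReal.ofReal_ofNat, two_mul]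
  refine (measure_mono fun xs hxs => ?_).trans
    ((measure_union_le _ _).trans (add_le_add hupper hlower))
  simp only [Pi.neg_apply, Finset.sum_neg_distrib, integral_neg, mul_neg]
  rw [Set.mem_ofPred_eq, le_abs] at hxs
  refine hxs.imp id fun hneg => ?_
  rw [Set.mem_ofPred_eq]
  linarith

theorem stmt16 {X : Type*} [MeasurableSpace X] (K : X → Measure X) (π μt : Measure X)
    (hK : ∀ x, IsProbabilityMeasure (K x)) (hKmeas : Measurable K)
    [IsProbabilityMeasure π] [IsProbabilityMeasure μt]
    (γ : ℝ) (hγ : γ ∈ Set.Ioc (0 : ℝ) 1)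
    (hrev : Reversible K π) (hgap : HasAbsSpectralGap K π γ)
    (W : ℝ) (hW : 1 ≤ W) (hwarm : IsWarm μt π W)
    (n : ℕ) -- the chain has length `P = n + 1 ≥ 1`
    (f : X → ℝ) (hfmeas : Measurable f) (B : ℝ) (hB : 0 < B) (hfB : ∀ x, |f x| ≤ B) :
    ∀ ε : ℝ, 0 < ε →
      (chainLaw K μt n)
          {xs | ε ≤ |(((n : ℝ) + 1))⁻¹ * (∑ i, f (xs i)) - ∫ x, f x ∂π|} ≤
        ENNReal.ofReal
          (2 * W * Real.exp (-(((n : ℝ) + 1) * γ * ε ^ 2 / (4 * B ^ 2)))) := by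
  intro ε hε
  have : IsMarkovKernel (⟨K, hKmeas⟩ : Kernel X X) := ⟨hK⟩
  have hinv : Kernel.Invariant ⟨K, hKmeas⟩ π :=
    Kernel.IsReversible.invariant fun A B hA hB => hrev A B hA hB
  exact stmt16_general ⟨K, hKmeas⟩ π μt γ hγ hinv hgap W hwarm n f hfmeas B hB hfB ε hε.le
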